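/- Let B ⊂ A be a regular inclusion of simple unital C*-algebras with a finite-index conditional expectation, and let E₀ : A → B be the minimal conditional expectation. Then E₀ admits a two-sided orthonormal quasi-basis: there exists a finite family (v_k) in A such that E₀(v_k* v_l) = δ_{kl}·1 for all k, l, and x = Σ_k E₀(x v_k) v_k* = Σ_k E₀(x v_k*) v_k for every x ∈ A. -/

import Mathlib

/-!
Write `M` for the relative commutant of `B` and `E` for the minimal expectation, of index `r`, with
quasi-basis `l`. Both `E` and `x ↦ ∑ i, l i * x * (l i)*` take scalar values on `M`, because the
centres of the simple algebras `B` and `A` are trivial.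

For self-adjoint `x ∈ M`, cutting `E` by `exp (t x / 2)` yields a family of expectations onto `B`;
by minimality the derivative of their index vanishes at `t = 0`, which says
`∑ i, l i * x * (l i)* = r E x` on `M`. Any other expectation has the form `E (· d)` with `d ∈ M`,
and if it satisfies the same identity then `d = 1`. By this uniqueness `E (u x u*) = u (E x) u*` for
`u` normalizing `B`. Unitaries of `M` normalize `B` and fix it pointwise, so `E (c y) = E (y c)` for
`c ∈ M`. For `v = u c` the two combine into the exchange formula `E (v y) = u E (y v) u*`.

Consider orthonormal families of such products `v = u c`. Bessel's inequality summed over the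
quasi-basis, together with the exchange formula, bounds their size by `r`. If such a family fails to
reconstruct a normalizing unitary `w`, the defect `w - ∑ k, v k * E ((v k)* w)` is again of the form
`w c` with `E (c* c)` a nonzero scalar, so after scaling it enlarges the family. A family that
cannot be enlarged thus reconstructs the normalizer, and by regularity all of `A`. By the exchange
formula the right expansion along it agrees with the left one.
-/

namespace RegularInclusion

variable {A : Type*} [NormedRing A] [StarRing A] [CStarRing A] [CompleteSpace A]
  [NormedAlgebra ℂ A] [StarModule ℂ A]

/-- A conditional expectation of `A` onto the subset `B`: a `ℂ`-linear positive
`B`-bimodular projection of `A` onto `B`. -/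
def IsCondExp (B : Set A) (E : A →ₗ[ℂ] A) : Prop :=
  (∀ x, E x ∈ B) ∧ (∀ b ∈ B, E b = b) ∧
  (∀ x, ∃ y, E (star x * x) = star y * y) ∧
  (∀ b₁ ∈ B, ∀ b₂ ∈ B, ∀ x, E (b₁ * x * b₂) = b₁ * E x * b₂)

/-- `l` is a right quasi-basis for `E`, witnessing finite index. -/
def IsRightQB (E : A →ₗ[ℂ] A) {n : ℕ} (l : Fin n → A) : Prop :=
  ∀ x, x = ∑ i, E (x * l i) * star (l i)

/-- The centralizer (relative commutant) `C_A(B)` of `B` in `A`. -/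
def cent (B : Set A) : Set A := {x | ∀ b ∈ B, x * b = b * x}

/-- The normalizer `N_A(B) = {u ∈ U(A) : uBu* = B}` of `B` in `A`. -/
def normalizer (B : Set A) : Set A :=
  {u | u ∈ unitary A ∧ (fun x => u * x * star u) '' B = B}

/-- The set `U(B)` of unitaries of `B`. -/
def UB (B : Set A) : Set A := {b | b ∈ B ∧ b ∈ unitary A}

/-- The set `U(B)·U(C_A(B))` of products of a unitary of `B` and a unitary of
the centralizer of `B`. -/
def UBC (B : Set A) : Set A :=
  {x | ∃ b c, b ∈ B ∧ b ∈ unitary A ∧ c ∈ cent B ∧ c ∈ unitary A ∧ x = b * c}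

/-- Simplicity of the C*-algebra (given as the subset `S` of `A`): the only closed
two-sided ideals of `S` are `{0}` and `S`. -/
def IsSimpleCStar (S : Set A) : Prop :=
  ∀ I : Set A, I ⊆ S → IsClosed I → (0 : A) ∈ I →
    (∀ x ∈ I, ∀ y ∈ I, x + y ∈ I) →
    (∀ x ∈ I, ∀ b ∈ S, x * b ∈ I ∧ b * x ∈ I) →
    I = {0} ∨ I = S

/-- The intermediate C*-subalgebra `C := C*(B ∪ C_A(B))` generated by `B` and the
centralizer of `B`. -/
def genC (B : Set A) : StarSubalgebra ℂ A :=
  (StarAlgebra.adjoin ℂ (B ∪ cent B)).topologicalClosure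

/-- Regularity of the inclusion `B ⊆ A`: the normalizer of `B` generates `A` as a
C*-algebra. -/
def IsRegular (B : Set A) : Prop :=
  (StarAlgebra.adjoin ℂ (normalizer B)).topologicalClosure = ⊤

/-- `E₀` is the minimal conditional expectation of `A` onto `B`: the finite-index
conditional expectation whose (scalar) Watatani index is least among all finite-index
conditional expectations onto `B`. -/
def IsMinimalCondExp (B : Set A) (E₀ : A →ₗ[ℂ] A) : Prop :=
  IsCondExp B E₀ ∧
  ∃ (r₀ : ℝ) (n : ℕ) (l : Fin n → A), IsRightQB E₀ l ∧
    (∑ i, l i * star (l i)) = (r₀ : ℂ) • 1 ∧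
    ∀ E : A →ₗ[ℂ] A, IsCondExp B E → ∀ (m : ℕ) (μ : Fin m → A), IsRightQB E μ →
      ∀ r : ℝ, (∑ i, μ i * star (μ i)) = (r : ℂ) • 1 → r₀ ≤ r

section TrivialCenter

variable {R : Type*} [NormedRing R] [CompleteSpace R]

/- The closed ideal generated by a central non-unit `y` is `closure (y S)`; it does not contain `1`,
because the units are open and a unit `y s` would make `y` invertible. -/
lemma IsSimpleCStar.eq_zero_of_commute_of_not_isUnit {σ : Type*} [SetLike σ R] [SubringClass σ R]
    {S : σ} (hS : IsSimpleCStar (S : Set R)) (hclosed : IsClosed (S : Set R)) {y : R} (hy : y ∈ S)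
    (hcomm : ∀ s ∈ S, Commute y s) (hunit : ¬ IsUnit y) : y = 0 := by
  have hideal : closure ((y * ·) '' (S : Set R)) = {0} ∨ closure ((y * ·) '' (S : Set R)) = S := by
    refine hS _ (closure_minimal ?_ hclosed) isClosed_closure
      (subset_closure ⟨0, zero_mem S, mul_zero y⟩) (fun a ha b hb => ?_)
      fun a ha b hb => ⟨?_, ?_⟩
    · rintro _ ⟨s, hs, rfl⟩
      exact mul_mem hy hs
    · refine map_mem_closure₂ continuous_add ha hb ?_
      rintro _ ⟨s, hs, rfl⟩ _ ⟨t, ht, rfl⟩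
      exact ⟨s + t, add_mem hs ht, mul_add y s t⟩
    · refine map_mem_closure (f := (· * b)) (continuous_mul_const b) ha ?_
      rintro _ ⟨s, hs, rfl⟩
      exact ⟨s * b, mul_mem hs hb, (mul_assoc y s b).symm⟩
    · refine map_mem_closure (f := (b * ·)) (continuous_const_mul b) ha ?_
      rintro _ ⟨s, hs, rfl⟩
      exact ⟨b * s, mul_mem hb hs, (hcomm b hb).left_comm s⟩
  rcases hideal with h | h
  · exact h.subset (subset_closure ⟨1, one_mem S, mul_one y⟩)
  · obtain ⟨_, hu, s, hs, rfl⟩ := mem_closure_iff_nhds.mp (h.superset (one_mem S)) _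
      (Units.isOpen.mem_nhds isUnit_one)
    exact absurd ((hcomm s hs).isUnit_mul_iff.mp hu).1 hunit

lemma IsSimpleCStar.isCentral [NormedAlgebra ℂ R] {S : Subalgebra ℂ R}
    (hS : IsSimpleCStar (S : Set R)) (hclosed : IsClosed (S : Set R)) : Algebra.IsCentral ℂ S where
  out z hz := by
    rcases subsingleton_or_nontrivial R with _ | _
    · exact Subsingleton.elim (0 : S) z ▸ zero_mem _
    obtain ⟨c, hc⟩ := spectrum.nonempty (z : R)
    refine Algebra.mem_bot.mpr ⟨c, Subtype.ext (sub_eq_zero.mp ?_)⟩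
    refine hS.eq_zero_of_commute_of_not_isUnit hclosed
      (sub_mem (S.algebraMap_mem c) z.2) (fun s hs => ?_) hc
    have hzs : Commute (z : R) s :=
      congrArg Subtype.val (Subalgebra.mem_center_iff.mp hz ⟨s, hs⟩).symm
    exact (Algebra.commute_algebraMap_left c (s : R)).sub_left hzs

lemma IsSimpleCStar.isCentral_of_univ [NormedAlgebra ℂ R]
    (hR : IsSimpleCStar (Set.univ : Set R)) : Algebra.IsCentral ℂ R :=
  have := IsSimpleCStar.isCentral (S := ⊤) hR isClosed_univ
  .of_algEquiv ℂ _ _ Subalgebra.topEquiv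

end TrivialCenter

variable {R : Type*} [CStarAlgebra R] {B : StarSubalgebra ℂ R} {E : R →ₗ[ℂ] R}

section Normalizer

/-- The relative commutant `B' ∩ R` of `B` as a `*`-subalgebra; its underlying set is
`cent (B : Set R)`. -/
def relCommutant (B : StarSubalgebra ℂ R) : StarSubalgebra ℂ R :=
  .centralizer ℂ (B : Set R)

lemma mem_relCommutant {x : R} : x ∈ relCommutant B ↔ ∀ b ∈ B, Commute x b :=
  (StarSubalgebra.mem_centralizer_iff ℂ).trans
    ⟨fun h b hb => (h b hb).1.symm, fun h b hb => ⟨(h b hb).symm, (h _ (star_mem hb)).symm⟩⟩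

lemma real_smul_mem_relCommutant (t : ℝ) {x : R} (hx : x ∈ relCommutant B) :
    t • x ∈ relCommutant B := by
  rw [← Complex.coe_smul]
  exact SMulMemClass.smul_mem _ hx

lemma isClosed_relCommutant : IsClosed (relCommutant B : Set R) := by
  rw [relCommutant, StarSubalgebra.coe_centralizer]
  exact Set.isClosed_centralizer _

lemma coe_mem_normalizer_iff {u : unitary R} :
    (u : R) ∈ normalizer (B : Set R) ↔ ∀ b, Unitary.conjStarAlgAut ℂ R u b ∈ B ↔ b ∈ B := by
  have himage := (Unitary.conjStarAlgAut ℂ R u).toEquiv.eq_preimage_iff_image_eq B B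
  exact (and_iff_right u.2).trans <| himage.symm.trans <| Set.ext_iff.trans <|
    forall_congr' fun _ => Iff.comm

lemma one_mem_normalizer : (1 : R) ∈ normalizer (B : Set R) :=
  coe_mem_normalizer_iff (u := 1).mpr fun b => by simp

lemma mul_mem_normalizer {u w : R} (hu : u ∈ normalizer (B : Set R))
    (hw : w ∈ normalizer (B : Set R)) : u * w ∈ normalizer (B : Set R) := by
  lift u to unitary R using hu.1
  lift w to unitary R using hw.1
  rw [coe_mem_normalizer_iff] at hu hw
  refine coe_mem_normalizer_iff (u := u * w).mpr fun b => ?_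
  rw [map_mul, StarAlgEquiv.aut_mul, StarAlgEquiv.trans_apply, hu, hw]

lemma star_mem_normalizer {u : R} (hu : u ∈ normalizer (B : Set R)) :
    star u ∈ normalizer (B : Set R) := by
  lift u to unitary R using hu.1
  rw [coe_mem_normalizer_iff] at hu
  refine coe_mem_normalizer_iff (u := star u).mpr fun b => ?_
  rw [← hu, ← Unitary.conjStarAlgAut_mul_apply, Unitary.mul_star_self, map_one]
  rfl

lemma coe_mem_normalizer_of_mem_relCommutant {u : unitary R} (hu : (u : R) ∈ relCommutant B) :
    (u : R) ∈ normalizer (B : Set R) :=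
  ⟨u.2, Set.EqOn.image_eq_self fun b hb =>
    (commute_unitary_iff_star_right_conjugate u.2).mp (mem_relCommutant.mp hu b hb)⟩

lemma dense_span_normalizer (hreg : IsRegular (B : Set R)) :
    Dense (Submodule.span ℂ (normalizer (B : Set R)) : Set R) := by
  let N : Submonoid R :=
    { carrier := normalizer (B : Set R)
      one_mem' := one_mem_normalizer
      mul_mem' := mul_mem_normalizer }
  have hstar : star (normalizer (B : Set R)) = normalizer (B : Set R) :=
    Set.ext fun x => ⟨fun hx => star_star x ▸ star_mem_normalizer hx, star_mem_normalizer⟩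
  have hspan : (StarAlgebra.adjoin ℂ (normalizer (B : Set R))).toSubalgebra.toSubmodule
      = Submodule.span ℂ (normalizer (B : Set R)) := by
    rw [StarAlgebra.adjoin_toSubalgebra, hstar, Set.union_self, Algebra.adjoin_eq_span]
    exact congrArg (fun S : Submonoid R => Submodule.span ℂ (S : Set R)) N.closure_eq
  rw [← hspan]
  exact dense_iff_closure_eq.mpr (congrArg SetLike.coe hreg)

end Normalizer

section CondExp

lemma IsCondExp.apply_mem (hE : IsCondExp (B : Set R) E) (x : R) : E x ∈ B :=
  hE.1 x

lemma IsCondExp.apply_of_mem (hE : IsCondExp (B : Set R) E) {b : R} (hb : b ∈ B) : E b = b :=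
  hE.2.1 b hb

lemma IsCondExp.map_one (hE : IsCondExp (B : Set R) E) : E 1 = 1 :=
  hE.apply_of_mem (one_mem B)

lemma IsCondExp.map_mul_left (hE : IsCondExp (B : Set R) E) {b : R} (hb : b ∈ B) (x : R) :
    E (b * x) = b * E x := by
  simpa using hE.2.2.2 b hb 1 (one_mem B) x

lemma IsCondExp.map_mul_right (hE : IsCondExp (B : Set R) E) {b : R} (hb : b ∈ B) (x : R) :
    E (x * b) = E x * b := by
  simpa using hE.2.2.2 1 (one_mem B) b hb x

lemma IsCondExp.map_sum_mul_apply (hE : IsCondExp (B : Set R) E) {ι : Type*} (s : Finset ι)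
    (v : ι → R) (a : R) (f : ι → R) :
    E (a * ∑ i ∈ s, v i * E (f i)) = ∑ i ∈ s, E (a * v i) * E (f i) := by
  simp only [Finset.mul_sum, map_sum, ← mul_assoc, hE.map_mul_right (hE.apply_mem _)]

/-- Orthonormality of a family with respect to the `B`-valued inner product `E (x* y)`. -/
def IsOrthonormal (E : R →ₗ[ℂ] R) {ι : Type*} [DecidableEq ι] (v : ι → R) : Prop :=
  ∀ i j, E (star (v i) * v j) = if i = j then 1 else 0

lemma IsOrthonormal.apply_star_mul_sum {ι : Type*} [Fintype ι] [DecidableEq ι] {v : ι → R}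
    (hv : IsOrthonormal E v) (hE : IsCondExp (B : Set R) E) (x : R) (i : ι) :
    E (star (v i) * ∑ j, v j * E (star (v j) * x)) = E (star (v i) * x) := by
  simp only [hE.map_sum_mul_apply, hv i, ite_mul, one_mul, zero_mul, Finset.sum_ite_eq,
    Finset.mem_univ, if_true]

variable [PartialOrder R] [StarOrderedRing R]

lemma IsCondExp.map_nonneg (hE : IsCondExp (B : Set R) E) {x : R} (hx : 0 ≤ x) : 0 ≤ E x := by
  obtain ⟨y, rfl⟩ := CStarAlgebra.nonneg_iff_eq_star_mul_self.mp hx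
  obtain ⟨z, hz⟩ := hE.2.2.1 y
  exact hz ▸ star_mul_self_nonneg z

lemma IsCondExp.map_star (hE : IsCondExp (B : Set R) E) (x : R) : E (star x) = star (E x) :=
  StarHomClass.map_star (PositiveLinearMap.mk₀ E fun _ => hE.map_nonneg) x

lemma IsCondExp.apply_star_mul (hE : IsCondExp (B : Set R) E) (x y : R) :
    E (star x * y) = star (E (star y * x)) := by
  rw [← hE.map_star, star_mul, star_star]

lemma IsCondExp.continuous (hE : IsCondExp (B : Set R) E) : Continuous E :=
  map_continuous (PositiveLinearMap.mk₀ E fun _ => hE.map_nonneg)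

lemma IsRightQB.expand (hE : IsCondExp (B : Set R) E) {n : ℕ} {l : Fin n → R}
    (hl : IsRightQB E l) (x : R) : x = ∑ i, l i * E (star (l i) * x) := by
  simpa [star_sum, ← hE.map_star] using congrArg star (hl (star x))

lemma IsOrthonormal.bessel {ι : Type*} [Fintype ι] [DecidableEq ι] {v : ι → R}
    (hv : IsOrthonormal E v) (hE : IsCondExp (B : Set R) E) (x : R) :
    ∑ i, E (star x * v i) * E (star (v i) * x) ≤ E (star x * x) := by
  set p := ∑ i, v i * E (star (v i) * x) with hp
  have hxp : E (star x * p) = ∑ i, E (star x * v i) * E (star (v i) * x) :=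
    hE.map_sum_mul_apply _ _ _ _
  have hpx : E (star p * (x - p)) = 0 := by
    rw [hE.apply_star_mul, hp, hE.map_sum_mul_apply, ← hp, star_eq_zero]
    refine Finset.sum_eq_zero fun i _ => ?_
    rw [hE.apply_star_mul, mul_sub, map_sub, hv.apply_star_mul_sum hE, sub_self, star_zero,
      zero_mul]
  have hnonneg : 0 ≤ E (star (x - p) * (x - p)) := hE.map_nonneg (star_mul_self_nonneg _)
  rw [star_sub, sub_mul, map_sub, hpx, sub_zero, mul_sub, map_sub, hxp] at hnonneg
  exact sub_nonneg.mp hnonneg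

lemma IsCondExp.star_apply_mul_apply_le (hE : IsCondExp (B : Set R) E) (x : R) :
    star (E x) * E x ≤ E (star x * x) := by
  have hone : IsOrthonormal E fun _ : Unit => (1 : R) := fun _ _ => by simp [hE.map_one]
  simpa [hE.map_star] using hone.bessel hE x

/- Kadison's inequality gives `|E (a x)|² ≤ E (x* a* a x) ≤ ‖a* a‖ E (x* x) = 0` for all `a`, so
all coefficients of `x` with respect to the quasi-basis vanish. -/
lemma IsCondExp.faithful (hE : IsCondExp (B : Set R) E) {n : ℕ} {l : Fin n → R}
    (hl : IsRightQB E l) {x : R} (hx : E (star x * x) = 0) : x = 0 := by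
  have hcoeff : ∀ a, E (a * x) = 0 := fun a => by
    have hle : star x * (star a * a) * x ≤ ‖star a * a‖ • (star x * x) :=
      CStarAlgebra.star_left_conjugate_le_norm_smul (IsSelfAdjoint.star_mul_self a)
    have hEle : E (star (a * x) * (a * x)) ≤ E (‖star a * a‖ • (star x * x)) := by
      refine sub_nonneg.mp (map_sub E _ _ ▸ hE.map_nonneg (sub_nonneg.mpr ?_))
      simpa only [star_mul, mul_assoc] using hle
    rw [← Complex.coe_smul, map_smul, hx, smul_zero] at hEle
    exact (CStarRing.star_mul_self_eq_zero_iff _).mp <|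
      le_antisymm ((hE.star_apply_mul_apply_le _).trans hEle) (star_mul_self_nonneg _)
  rw [hl.expand hE x]
  simp only [hcoeff, mul_zero, Finset.sum_const_zero]

end CondExp

section Scalars

lemma mem_bot_of_mem_of_mem_relCommutant [Algebra.IsCentral ℂ B] {x : R} (hx : x ∈ B)
    (hxc : x ∈ relCommutant B) : x ∈ (⊥ : Subalgebra ℂ R) := by
  have hcenter : (⟨x, hx⟩ : B) ∈ Subalgebra.center ℂ B :=
    Subalgebra.mem_center_iff.mpr fun b => Subtype.ext (mem_relCommutant.mp hxc b b.2).symm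
  obtain ⟨c, hc⟩ := Algebra.mem_bot.mp (Algebra.IsCentral.center_eq_bot ℂ B ▸ hcenter)
  exact Algebra.mem_bot.mpr ⟨c, congrArg Subtype.val hc⟩

lemma IsCondExp.apply_mem_relCommutant (hE : IsCondExp (B : Set R) E) {x : R}
    (hx : x ∈ relCommutant B) : E x ∈ relCommutant B :=
  mem_relCommutant.mpr fun b hb => by
    rw [commute_iff_eq, ← hE.map_mul_left hb, ← hE.map_mul_right hb, mem_relCommutant.mp hx b hb]

lemma IsCondExp.apply_mem_bot [Algebra.IsCentral ℂ B] (hE : IsCondExp (B : Set R) E) {x : R}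
    (hx : x ∈ relCommutant B) : E x ∈ (⊥ : Subalgebra ℂ R) :=
  mem_bot_of_mem_of_mem_relCommutant (hE.apply_mem x) (hE.apply_mem_relCommutant hx)

lemma exists_eq_real_smul_one {x : R} (hx : x ∈ (⊥ : Subalgebra ℂ R)) (hsa : IsSelfAdjoint x) :
    ∃ s : ℝ, x = s • (1 : R) := by
  obtain ⟨c, rfl⟩ := Algebra.mem_bot.mp hx
  refine ⟨c.re, ?_⟩
  rw [← hsa.coe_realPart, Algebra.algebraMap_eq_smul_one, realPart_smul, realPart_one,
    (IsSelfAdjoint.one R).imaginaryPart, smul_zero, sub_zero]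
  rfl

lemma apply_star_mul_inv_sqrt_smul {x : R} {s : ℝ} (hs : 0 < s)
    (hx : E (star x * x) = s • 1) : E (star ((√s)⁻¹ • x) * ((√s)⁻¹ • x)) = 1 := by
  rw [star_smul, star_trivial, smul_mul_smul_comm, E.map_smul_of_tower, hx, smul_smul,
    ← mul_inv, Real.mul_self_sqrt hs.le, inv_mul_cancel₀ hs.ne', one_smul]

variable [PartialOrder R] [StarOrderedRing R]

lemma nonneg_of_smul_one_nonneg [Nontrivial R] {s : ℝ} (h : 0 ≤ s • (1 : R)) : 0 ≤ s := by
  rw [← Algebra.algebraMap_eq_smul_one, ← map_zero (algebraMap ℝ R)] at h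
  exact algebraMap_le_algebraMap.mp h

lemma IsCondExp.exists_pos_smul_one [Algebra.IsCentral ℂ B] (hE : IsCondExp (B : Set R) E)
    {n : ℕ} {l : Fin n → R} (hl : IsRightQB E l) {x : R} (hx : x ∈ relCommutant B)
    (hx0 : x ≠ 0) : ∃ s : ℝ, 0 < s ∧ E (star x * x) = s • (1 : R) := by
  have := nontrivial_of_ne x 0 hx0
  have hnonneg : 0 ≤ E (star x * x) := hE.map_nonneg (star_mul_self_nonneg x)
  obtain ⟨s, hs⟩ := exists_eq_real_smul_one (hE.apply_mem_bot (mul_mem (star_mem hx) hx))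
    (IsSelfAdjoint.of_nonneg hnonneg)
  refine ⟨s, (nonneg_of_smul_one_nonneg (hs ▸ hnonneg)).lt_of_ne' ?_, hs⟩
  rintro rfl
  exact hx0 (hE.faithful hl (by rw [hs, zero_smul]))

end Scalars

section IndexMap

/-- The index map `x ↦ ∑ i, l i * x * (l i)*` of a finite family `l`; if `l` is a quasi-basis of
`E`, its value at `1` is the Watatani index of `E`. -/
noncomputable def indexMap {n : ℕ} (l : Fin n → R) : R →L[ℂ] R :=
  ∑ i, ContinuousLinearMap.mulLeftRight ℂ R (l i) (star (l i))

lemma indexMap_apply {n : ℕ} (l : Fin n → R) (x : R) :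
    indexMap l x = ∑ i, l i * x * star (l i) := by
  simp [indexMap]

lemma indexMap_one {n : ℕ} (l : Fin n → R) : indexMap l 1 = ∑ i, l i * star (l i) := by
  simp [indexMap_apply]

lemma star_indexMap {n : ℕ} (l : Fin n → R) (x : R) :
    star (indexMap l x) = indexMap l (star x) := by
  simp [indexMap_apply, mul_assoc]

variable [PartialOrder R] [StarOrderedRing R] {F : R →ₗ[ℂ] R} {n m : ℕ} {l : Fin n → R}
  {μ : Fin m → R}

lemma mul_indexMap_mul_of_apply_eq_apply_mul (hE : IsCondExp (B : Set R) E) (hl : IsRightQB E l)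
    (hF : IsCondExp (B : Set R) F) (hμ : IsRightQB F μ) {d : R} (hFE : ∀ x, F x = E (x * d))
    {y : R} (hy : y ∈ relCommutant B) (a : R) :
    a * indexMap μ (d * y) = indexMap l y * a := by
  have hcomm : ∀ x, F x * y = y * F x :=
    fun x => (mem_relCommutant.mp hy _ (hF.apply_mem x)).symm
  calc a * indexMap μ (d * y)
      = ∑ i, a * μ i * d * y * star (μ i) := by
        simp only [indexMap_apply, Finset.mul_sum, mul_assoc]
    _ = ∑ i, (∑ j, l j * F (star (l j) * a * μ i)) * y * star (μ i) := by
        simp only [hFE, mul_assoc, ← hl.expand hE]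
    _ = ∑ j, l j * y * ∑ i, F (star (l j) * a * μ i) * star (μ i) := by
        simp only [Finset.sum_mul, Finset.mul_sum, mul_assoc]
        rw [Finset.sum_comm]
        simp only [← mul_assoc (F _), hcomm, mul_assoc]
    _ = indexMap l y * a := by
        rw [indexMap_apply, Finset.sum_mul]
        exact Finset.sum_congr rfl fun j _ => by rw [← hμ (star (l j) * a), ← mul_assoc]

lemma indexMap_mem_bot [Algebra.IsCentral ℂ R] (hE : IsCondExp (B : Set R) E)
    (hl : IsRightQB E l) {y : R} (hy : y ∈ relCommutant B) :
    indexMap l y ∈ (⊥ : Subalgebra ℂ R) := by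
  rw [← Algebra.IsCentral.center_eq_bot ℂ R]
  refine Subalgebra.mem_center_iff.mpr fun a => ?_
  simpa using mul_indexMap_mul_of_apply_eq_apply_mul hE hl hE hl (d := 1) (by simp) hy a

end IndexMap

section Stationary

/-- A conditional expectation `E` onto `B` that is a critical point of the index: it has the
quasi-basis `l`, and on the relative commutant its index map is the multiple `r • E`. Evaluating at
`1` shows that `r` is the index of `E`. -/
structure IsStationary (B : StarSubalgebra ℂ R) (E : R →ₗ[ℂ] R) (r : ℝ) {n : ℕ} (l : Fin n → R) :
    Prop where
  isCondExp : IsCondExp (B : Set R) E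
  isRightQB : IsRightQB E l
  indexMap_eq : ∀ x ∈ relCommutant B, indexMap l x = r • E x

lemma IsCondExp.comp_mulLeftRight (hE : IsCondExp (B : Set R) E) {k : R} (hk : k ∈ relCommutant B)
    (hk1 : E (star k * k) = 1) :
    IsCondExp (B : Set R) (E ∘ₗ LinearMap.mulLeftRight ℂ (star k, k)) := by
  have hright : ∀ b ∈ B, k * b = b * k := mem_relCommutant.mp hk
  have hleft : ∀ b ∈ B, star k * b = b * star k := mem_relCommutant.mp (star_mem hk)
  have hF : ∀ x, (E ∘ₗ LinearMap.mulLeftRight ℂ (star k, k)) x = E (star k * x * k) := fun x => by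
    simp
  refine ⟨fun x => hE.apply_mem _, fun b hb => ?_, fun x => ?_, fun b₁ hb₁ b₂ hb₂ x => ?_⟩
  · rw [hF, hleft b hb, mul_assoc, hE.map_mul_left hb, hk1, mul_one]
  · obtain ⟨y, hy⟩ := hE.2.2.1 (x * k)
    exact ⟨y, by rw [hF, ← hy, star_mul]; simp only [mul_assoc]⟩
  · rw [hF, hF, ← hE.map_mul_left hb₁, ← hE.map_mul_right hb₂]
    simp only [mul_assoc, ← hright b₂ hb₂]
    simp only [← mul_assoc, hleft b₁ hb₁]

lemma IsRightQB.comp_mulLeftRight (hE : IsCondExp (B : Set R) E) {n : ℕ} {l : Fin n → R}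
    (hl : IsRightQB E l) {k : Rˣ} (hk : (k : R) ∈ relCommutant B) :
    IsRightQB (E ∘ₗ LinearMap.mulLeftRight ℂ (star (k : R), (k : R))) fun i => l i * ↑k⁻¹ := by
  intro x
  have hcomm : ∀ y, E y * star (↑k⁻¹ : R) = star (↑k⁻¹ : R) * E y := fun y =>
    (mem_relCommutant.mp (star_mem hk) _ (hE.apply_mem y)).symm.units_inv_right (u := star k)
  calc x = star (↑k⁻¹ : R) * (star (k : R) * x) := ((star k).inv_mul_cancel_left x).symm
    _ = ∑ i, star (↑k⁻¹ : R) * E (star (k : R) * x * l i) * star (l i) := by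
        rw [hl (star (k : R) * x), Finset.mul_sum, ← hl]
        simp only [mul_assoc]
    _ = _ := Finset.sum_congr rfl fun i _ => by
        rw [LinearMap.comp_apply, LinearMap.mulLeftRight_apply, star_mul, ← mul_assoc, hcomm]
        simp only [← mul_assoc, Units.inv_mul_cancel_right]

lemma exists_isCondExp_of_units (hE : IsCondExp (B : Set R) E) {n : ℕ} {l : Fin n → R}
    (hl : IsRightQB E l) {k : Rˣ} (hk : (k : R) ∈ relCommutant B) {s t : ℝ} (hs : 0 < s)
    (hEk : E (star (k : R) * k) = s • 1)
    (hlk : indexMap l (↑k⁻¹ * star (↑k⁻¹ : R)) = t • 1) :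
    ∃ (F : R →ₗ[ℂ] R) (μ : Fin n → R), IsCondExp (B : Set R) F ∧ IsRightQB F μ ∧
      indexMap μ 1 = (s * t) • 1 := by
  have hsqrt : √s ≠ 0 := (Real.sqrt_pos.mpr hs).ne'
  let c : Rˣ := (Units.mk0 (√s) hsqrt)⁻¹.map (algebraMap ℝ R)
  have hc : ((c * k : Rˣ) : R) = (√s)⁻¹ • (k : R) := by
    simp [c, Algebra.smul_def]
  have hcinv : ((c * k)⁻¹ : Rˣ) = √s • (↑k⁻¹ : R) := by
    simp [c, Algebra.smul_def, Algebra.commutes]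
  have hck : ((c * k : Rˣ) : R) ∈ relCommutant B := by
    rw [hc]
    exact real_smul_mem_relCommutant _ hk
  refine ⟨_, _, hE.comp_mulLeftRight hck ?_, hl.comp_mulLeftRight hE hck, ?_⟩
  · rw [hc, apply_star_mul_inv_sqrt_smul hs hEk]
  · have hterm : ∀ i, l i * ↑(c * k)⁻¹ * 1 * star (l i * ↑(c * k)⁻¹)
        = s • (l i * (↑k⁻¹ * star ↑k⁻¹) * star (l i)) := fun i => by
      rw [hcinv, mul_smul_comm, mul_one, star_smul, star_trivial, smul_mul_smul_comm,
        Real.mul_self_sqrt hs.le, star_mul]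
      simp only [mul_assoc]
    rw [indexMap_apply, Finset.sum_congr rfl fun i _ => hterm i, ← Finset.smul_sum,
      ← indexMap_apply, hlk, smul_smul]

lemma exists_units_star_mul_self_eq_exp {y : R} (hy : y ∈ relCommutant B) (hsa : IsSelfAdjoint y) :
    ∃ k : Rˣ, (k : R) ∈ relCommutant B ∧ star (k : R) * k = NormedSpace.exp y ∧
      (↑k⁻¹ * star ↑k⁻¹ : R) = NormedSpace.exp (-y) := by
  let _ : NormedAlgebra ℚ R := .restrictScalars ℚ ℂ R
  set z : R := (2⁻¹ : ℝ) • y with hz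
  have hzz : z + z = y := by rw [hz, ← two_smul ℝ, smul_inv_smul₀ two_ne_zero]
  have hstar : star (NormedSpace.exp z) = NormedSpace.exp z := by
    rw [NormedSpace.star_exp, hz, star_smul, star_trivial, hsa.star_eq]
  have hstar' : star (NormedSpace.exp (-z)) = NormedSpace.exp (-z) := by
    rw [NormedSpace.star_exp, star_neg, hz, star_smul, star_trivial, hsa.star_eq]
  have hadd : ∀ w : R, NormedSpace.exp w * NormedSpace.exp w = NormedSpace.exp (w + w) := fun w =>
    (NormedSpace.exp_add_of_commute (Commute.refl w)).symm
  refine ⟨⟨NormedSpace.exp z, NormedSpace.exp (-z), ?_, ?_⟩, ?_, ?_, ?_⟩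
  · rw [← NormedSpace.exp_add_of_commute (Commute.refl z).neg_right, add_neg_cancel,
      NormedSpace.exp_zero]
  · rw [← NormedSpace.exp_add_of_commute (Commute.refl z).neg_left, neg_add_cancel,
      NormedSpace.exp_zero]
  · exact mem_relCommutant.mpr fun b hb => ((mem_relCommutant.mp hy b hb).smul_left _).exp_left
  · rw [hstar, hadd, hzz]
  · rw [Units.inv_mk, hstar', hadd, ← neg_add, hzz]

lemma exp_variation {𝔸 : Type*} [NormedRing 𝔸] [NormedAlgebra ℝ 𝔸] [CompleteSpace 𝔸]
    (L₁ L₂ : 𝔸 →L[ℝ] ℝ) {x : 𝔸}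
    (h : ∀ t : ℝ, L₁ 1 * L₂ 1 ≤ L₁ (NormedSpace.exp (t • x)) * L₂ (NormedSpace.exp (-(t • x)))) :
    L₁ x * L₂ 1 = L₁ 1 * L₂ x := by
  have hderiv : ∀ (L : 𝔸 →L[ℝ] ℝ) (y : 𝔸),
      HasDerivAt (fun t : ℝ => L (NormedSpace.exp (t • y))) (L y) 0 := fun L y => by
    have := L.hasFDerivAt.comp_hasDerivAt (0 : ℝ) (hasDerivAt_exp_smul_const (𝕂 := ℝ) y 0)
    simpa only [Function.comp_def, zero_smul, NormedSpace.exp_zero, one_mul] using this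
  have hmin : IsLocalMin ((fun t : ℝ => L₁ (NormedSpace.exp (t • x))) *
      fun t : ℝ => L₂ (NormedSpace.exp (t • -x))) 0 := by
    refine Filter.Eventually.of_forall fun t => ?_
    simpa only [Pi.mul_apply, zero_smul, NormedSpace.exp_zero, smul_neg, neg_zero] using h t
  have hzero := hmin.hasDerivAt_eq_zero ((hderiv L₁ x).mul (hderiv L₂ (-x)))
  simp only [zero_smul, NormedSpace.exp_zero, map_neg, mul_neg] at hzero
  exact add_neg_eq_zero.mp hzero

variable [PartialOrder R] [StarOrderedRing R]

lemma exists_isCondExp_of_exp [Nontrivial R] [Algebra.IsCentral ℂ R] [Algebra.IsCentral ℂ B]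
    (hE : IsCondExp (B : Set R) E) {n : ℕ} {l : Fin n → R} (hl : IsRightQB E l) {y : R}
    (hy : y ∈ relCommutant B) (hsa : IsSelfAdjoint y) :
    ∃ s t : ℝ, E (NormedSpace.exp y) = s • 1 ∧ indexMap l (NormedSpace.exp (-y)) = t • 1 ∧
      ∃ (F : R →ₗ[ℂ] R) (μ : Fin n → R), IsCondExp (B : Set R) F ∧ IsRightQB F μ ∧
        indexMap μ 1 = (s * t) • 1 := by
  obtain ⟨k, hk, hky, hkinv⟩ := exists_units_star_mul_self_eq_exp hy hsa
  obtain ⟨s, hs, hEk⟩ := hE.exists_pos_smul_one hl hk k.ne_zero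
  have hkinv_mem : (↑k⁻¹ : R) ∈ relCommutant B :=
    mem_relCommutant.mpr fun b hb => (mem_relCommutant.mp hk b hb).units_inv_left
  obtain ⟨t, ht⟩ := exists_eq_real_smul_one
    (indexMap_mem_bot hE hl (mul_mem hkinv_mem (star_mem hkinv_mem)))
    (by rw [isSelfAdjoint_iff, star_indexMap, star_mul, star_star])
  exact ⟨s, t, hky ▸ hEk, hkinv ▸ ht, exists_isCondExp_of_units hE hl hk hs hEk ht⟩

lemma indexMap_eq_smul_of_isSelfAdjoint [Nontrivial R] [Algebra.IsCentral ℂ R]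
    [Algebra.IsCentral ℂ B] (hE : IsCondExp (B : Set R) E) {n : ℕ} {l : Fin n → R}
    (hl : IsRightQB E l) {r : ℝ} (hr : indexMap l 1 = r • 1)
    (hmin : ∀ (F : R →ₗ[ℂ] R) (μ : Fin n → R), IsCondExp (B : Set R) F → IsRightQB F μ →
      ∀ t : ℝ, indexMap μ 1 = t • 1 → r ≤ t)
    {y : R} (hy : y ∈ relCommutant B) (hsa : IsSelfAdjoint y) : indexMap l y = r • E y := by
  obtain ⟨φ, hφ⟩ := SeparatingDual.exists_eq_one (R := ℝ) (one_ne_zero : (1 : R) ≠ 0)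
  have hφs : ∀ s : ℝ, φ (s • 1) = s := fun s => by rw [map_smul, hφ, smul_eq_mul, mul_one]
  let L₁ : R →L[ℝ] ℝ := φ.comp ((⟨E, hE.continuous⟩ : R →L[ℂ] R).restrictScalars ℝ)
  let L₂ : R →L[ℝ] ℝ := φ.comp ((indexMap l).restrictScalars ℝ)
  have hL₁ : ∀ {w : R} {s : ℝ}, E w = s • 1 → L₁ w = s := fun h => (congrArg φ h).trans (hφs _)
  have hL₂ : ∀ {w : R} {s : ℝ}, indexMap l w = s • 1 → L₂ w = s :=
    fun h => (congrArg φ h).trans (hφs _)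
  have hE1 : E 1 = (1 : ℝ) • 1 := by rw [hE.map_one, one_smul]
  have hvar := exp_variation L₁ L₂ (x := y) fun t => by
    obtain ⟨a, b, ha, hb, F, μ, hF, hμ, hμ1⟩ :=
      exists_isCondExp_of_exp hE hl (real_smul_mem_relCommutant t hy)
        ((IsSelfAdjoint.all t).smul hsa)
    rw [hL₁ hE1, hL₂ hr, one_mul, hL₁ ha, hL₂ hb]
    exact hmin F μ hF hμ _ hμ1
  obtain ⟨a, ha⟩ := exists_eq_real_smul_one (hE.apply_mem_bot hy)
    (by rw [isSelfAdjoint_iff, ← hE.map_star, hsa.star_eq])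
  obtain ⟨b, hb⟩ := exists_eq_real_smul_one (indexMap_mem_bot hE hl hy)
    (by rw [isSelfAdjoint_iff, star_indexMap, hsa.star_eq])
  rw [hL₁ ha, hL₂ hr, hL₁ hE1, hL₂ hb, one_mul] at hvar
  rw [ha, hb, ← hvar, smul_smul, mul_comm]

lemma IsMinimalCondExp.exists_isStationary [Nontrivial R] [Algebra.IsCentral ℂ R]
    [Algebra.IsCentral ℂ B] (hE : IsMinimalCondExp (B : Set R) E) :
    ∃ (r : ℝ) (n : ℕ) (l : Fin n → R), IsStationary B E r l := by
  obtain ⟨hE, r, n, l, hl, hr, hmin⟩ := hE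
  have hsa : ∀ y ∈ relCommutant B, IsSelfAdjoint y → indexMap l y = r • E y :=
    fun y => indexMap_eq_smul_of_isSelfAdjoint hE hl
      (by rw [indexMap_one, hr, Complex.coe_smul])
      fun F μ hF hμ t ht => hmin F hF n μ hμ t (by rw [← indexMap_one, ht, Complex.coe_smul])
  refine ⟨r, n, l, hE, hl, fun x hx => ?_⟩
  have hre : (realPart x : R) ∈ relCommutant B := by
    rw [realPart_apply_coe]
    exact real_smul_mem_relCommutant _ (add_mem hx (star_mem hx))
  have him : (imaginaryPart x : R) ∈ relCommutant B := by
    rw [imaginaryPart_apply_coe]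
    exact SMulMemClass.smul_mem _ (real_smul_mem_relCommutant _ (sub_mem hx (star_mem hx)))
  rw [← realPart_add_I_smul_imaginaryPart x]
  simp only [map_add, map_smul, smul_add, hsa _ hre (realPart x).2, hsa _ him (imaginaryPart x).2,
    smul_comm r Complex.I]

end Stationary

section Uniqueness

variable [PartialOrder R] [StarOrderedRing R] {F : R →ₗ[ℂ] R} {r : ℝ} {n m : ℕ} {l : Fin n → R}
  {μ : Fin m → R}

lemma IsStationary.ne_zero [Nontrivial R] (h : IsStationary B E r l) : r ≠ 0 := by
  rintro rfl
  have hsum : ∑ i, l i * star (l i) = 0 := by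
    rw [← indexMap_one, h.indexMap_eq 1 (one_mem _), zero_smul]
  have hl : ∀ i, star (l i) = 0 := fun i =>
    star_eq_zero.mpr <| (CStarRing.mul_star_self_eq_zero_iff _).mp <|
      (Finset.sum_eq_zero_iff_of_nonneg fun i _ => mul_star_self_nonneg (l i)).mp hsum i
        (Finset.mem_univ i)
  refine one_ne_zero (α := R) (h.isRightQB 1 |>.trans ?_)
  simp only [hl, mul_zero, Finset.sum_const_zero]

lemma IsCondExp.exists_eq_apply_mul (hF : IsCondExp (B : Set R) F) (hE : IsCondExp (B : Set R) E)
    (hl : IsRightQB E l) : ∃ d ∈ relCommutant B, ∀ x, F x = E (x * d) := by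
  have hd : ∀ x, F x = E (x * ∑ i, l i * F (star (l i))) := fun x => by
    conv_lhs => rw [hl x]
    simp only [map_sum, Finset.mul_sum, hF.map_mul_left (hE.apply_mem _), ← mul_assoc,
      hE.map_mul_right (hF.apply_mem _)]
  refine ⟨_, mem_relCommutant.mpr fun b hb => sub_eq_zero.mp (hE.faithful hl ?_), hd⟩
  rw [mul_sub, map_sub, ← mul_assoc, ← mul_assoc, hE.map_mul_right hb, ← hd, ← hd,
    hF.map_mul_right hb, sub_self]

/- Writing `F = E (· d)`, stationarity of both expectations gives `F (d y) = E y` on the relative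
commutant, whence `F ((1 - d) (1 - d)*) = 0`. -/
lemma IsStationary.unique (hE : IsStationary B E r l) (hF : IsStationary B F r μ) : F = E := by
  rcases subsingleton_or_nontrivial R with _ | _
  · exact LinearMap.ext fun x => Subsingleton.elim _ _
  obtain ⟨d, hd, hFE⟩ := hF.isCondExp.exists_eq_apply_mul hE.isCondExp hE.isRightQB
  have hdy : ∀ y ∈ relCommutant B, F (d * y) = E y := fun y hy => by
    have hindex := mul_indexMap_mul_of_apply_eq_apply_mul hE.isCondExp hE.isRightQB hF.isCondExp
      hF.isRightQB hFE hy 1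
    rw [one_mul, mul_one, hE.indexMap_eq y hy, hF.indexMap_eq _ (mul_mem hd hy)] at hindex
    exact smul_right_injective R hE.ne_zero hindex
  have hFd : F d = 1 := by simpa only [mul_one, hE.isCondExp.map_one] using hdy 1 (one_mem _)
  have hEd : E d = 1 := by rw [← one_mul d, ← hFE, hF.isCondExp.map_one]
  have hzero : F (star (star (1 - d)) * star (1 - d)) = 0 := by
    have hexp : star (star (1 - d)) * star (1 - d) = 1 - star d - (d - d * star d) := by
      rw [star_star, star_sub, star_one, sub_mul, mul_sub, mul_sub, mul_one, mul_one, one_mul]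
    rw [hexp, map_sub, map_sub, map_sub, hdy _ (star_mem hd), hF.isCondExp.map_star,
      hE.isCondExp.map_star, hF.isCondExp.map_one, hFd, hEd, star_one, sub_self]
  have hd1 : d = 1 := (sub_eq_zero.mp <| star_eq_zero.mp <|
    hF.isCondExp.faithful hF.isRightQB hzero).symm
  exact LinearMap.ext fun x => by rw [hFE, hd1, mul_one]

end Uniqueness

section Equivariance

variable {α : R ≃⋆ₐ[ℂ] R} {r : ℝ} {n : ℕ} {l : Fin n → R}

lemma IsCondExp.conj (hE : IsCondExp (B : Set R) E) (hα : ∀ b, α b ∈ B ↔ b ∈ B) :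
    IsCondExp (B : Set R) (α.toAlgEquiv.toLinearEquiv.conj E) := by
  have hmem : ∀ b ∈ B, α.symm b ∈ B := fun b hb => (hα _).mp (by rwa [α.apply_symm_apply])
  have hconj : ∀ x, α.toAlgEquiv.toLinearEquiv.conj E x = α (E (α.symm x)) := fun _ => rfl
  refine ⟨fun x => (hα _).mpr (hE.apply_mem _), fun b hb => ?_, fun x => ?_,
    fun b₁ hb₁ b₂ hb₂ x => ?_⟩
  · rw [hconj, hE.apply_of_mem (hmem b hb), α.apply_symm_apply]
  · obtain ⟨y, hy⟩ := hE.2.2.1 (α.symm x)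
    exact ⟨α y, by rw [hconj, map_mul, StarHomClass.map_star, hy, map_mul, StarHomClass.map_star]⟩
  · simp only [hconj, map_mul, hE.map_mul_right (hmem b₂ hb₂), hE.map_mul_left (hmem b₁ hb₁),
      α.apply_symm_apply]

lemma map_mem_relCommutant (hα : ∀ b, α b ∈ B ↔ b ∈ B) {x : R} (hx : x ∈ relCommutant B) :
    α x ∈ relCommutant B :=
  mem_relCommutant.mpr fun b hb => by
    have hmem : α.symm b ∈ B := (hα _).mp (by rwa [α.apply_symm_apply])
    simpa only [α.apply_symm_apply] using (mem_relCommutant.mp hx _ hmem).map α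

lemma IsStationary.conj (h : IsStationary B E r l) (hα : ∀ b, α b ∈ B ↔ b ∈ B) :
    IsStationary B (α.toAlgEquiv.toLinearEquiv.conj E) r fun i => α (l i) := by
  have hconj : ∀ x, α.toAlgEquiv.toLinearEquiv.conj E x = α (E (α.symm x)) := fun _ => rfl
  have hα' : ∀ b, α.symm b ∈ B ↔ b ∈ B := fun b => by rw [← hα, α.apply_symm_apply]
  refine ⟨h.isCondExp.conj hα, fun x => ?_, fun x hx => ?_⟩
  · have hexp := congrArg α (h.isRightQB (α.symm x))
    simpa only [α.apply_symm_apply, map_sum, map_mul, map_star, hconj, α.symm_apply_apply]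
      using hexp
  · have hindex := congrArg α (h.indexMap_eq _ (map_mem_relCommutant hα' hx))
    simpa only [indexMap_apply, hconj, map_sum, map_mul, map_star, α.apply_symm_apply,
      ← Complex.coe_smul, map_smul] using hindex

variable [PartialOrder R] [StarOrderedRing R]

lemma IsStationary.apply_map (h : IsStationary B E r l) (hα : ∀ b, α b ∈ B ↔ b ∈ B) (x : R) :
    E (α x) = α (E x) := by
  calc E (α x) = α (E (α.symm (α x))) := (LinearMap.congr_fun (h.unique (h.conj hα)) _).symm
    _ = α (E x) := by rw [α.symm_apply_apply]

lemma IsStationary.apply_conj (h : IsStationary B E r l) {u : unitary R}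
    (hu : (u : R) ∈ normalizer (B : Set R)) (x : R) :
    E (u * x * star (u : R)) = u * E x * star (u : R) :=
  h.apply_map (coe_mem_normalizer_iff.mp hu) x

end Equivariance

section Exchange

variable [PartialOrder R] [StarOrderedRing R] {r : ℝ} {n : ℕ} {l : Fin n → R}

/- A unitary of the relative commutant normalizes `B` and fixes it pointwise, so equivariance gives
the claim for unitaries; these span the relative commutant. -/
lemma IsStationary.apply_mul_comm (h : IsStationary B E r l) {x : R} (hx : x ∈ relCommutant B)
    (y : R) : E (x * y) = E (y * x) := by
  have := isClosed_relCommutant (B := B)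
  let inclusion : relCommutant B →ₗ[ℂ] R := (relCommutant B).subtype.toLinearMap
  have hunitary : Set.EqOn (E ∘ₗ LinearMap.mulRight ℂ y ∘ₗ inclusion)
      (E ∘ₗ LinearMap.mulLeft ℂ y ∘ₗ inclusion) (unitary (relCommutant B)) := fun c hc => by
    let u : unitary R := ⟨c, congrArg Subtype.val hc.1, congrArg Subtype.val hc.2⟩
    have hfix : ∀ b ∈ B, (u : R) * b * star (u : R) = b := fun b hb =>
      (commute_unitary_iff_star_right_conjugate u.2).mp (mem_relCommutant.mp c.2 b hb)
    calc E (u * y) = E (u * (y * u) * star (u : R)) := by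
          rw [mul_assoc, mul_assoc y, Unitary.mul_star_self_of_mem u.2, mul_one]
      _ = E (y * u) := by
          rw [h.apply_conj (coe_mem_normalizer_of_mem_relCommutant c.2),
            hfix _ (h.isCondExp.apply_mem _)]
  exact LinearMap.congr_fun (LinearMap.ext_on (CStarAlgebra.span_unitary _) hunitary) ⟨x, hx⟩

lemma IsStationary.apply_mul_left (h : IsStationary B E r l) {u : unitary R}
    (hu : (u : R) ∈ normalizer (B : Set R)) {c : R} (hc : c ∈ relCommutant B) (y : R) :
    E (u * c * y) = u * E (y * (u * c)) * star (u : R) := by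
  rw [← mul_assoc y, ← h.apply_mul_comm hc, ← h.apply_conj hu]
  simp only [mul_assoc, Unitary.mul_star_self_of_mem u.2, mul_one]

lemma IsStationary.apply_mul_star (h : IsStationary B E r l) {u : unitary R}
    (hu : (u : R) ∈ normalizer (B : Set R)) {c : R} (hc : c ∈ relCommutant B) (y : R) :
    E (y * star (u * c)) = u * E (star (u * c) * y) * star (u : R) := by
  have hstar := congrArg star (h.apply_mul_left hu hc (star y))
  simpa only [← h.isCondExp.map_star, star_mul, star_star, mul_assoc] using hstar

end Exchange

section NormalizingFamily

/-- An orthonormal family whose members `u k * c k` are products of a unitary `u k` normalizing `B`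
and an element `c k` of the relative commutant. The factors are part of the data. -/
structure IsNormalizingFamily (B : StarSubalgebra ℂ R) (E : R →ₗ[ℂ] R) {ι : Type*} [DecidableEq ι]
    (u : ι → unitary R) (c : ι → R) : Prop where
  mem_normalizer : ∀ k, (u k : R) ∈ normalizer (B : Set R)
  mem_relCommutant : ∀ k, c k ∈ relCommutant B
  isOrthonormal : IsOrthonormal E fun k => u k * c k

lemma IsCondExp.star_mul_mul_apply_mem_relCommutant (hE : IsCondExp (B : Set R) E)
    {g : unitary R} (hg : (g : R) ∈ normalizer (B : Set R)) {c : R} (hc : c ∈ relCommutant B) :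
    star (g : R) * c * E (star c * g) ∈ relCommutant B := by
  refine mem_relCommutant.mpr fun b hb => ?_
  set β := (g : R) * b * star (g : R) with hβ
  have hβB : β ∈ B := (coe_mem_normalizer_iff.mp hg b).mpr hb
  have hgb : (g : R) * b = β * g := by
    rw [hβ, mul_assoc _ (star (g : R)), Unitary.star_mul_self_of_mem g.2, mul_one]
  have hbg : b * star (g : R) = star (g : R) * β := by
    rw [hβ, ← mul_assoc, ← mul_assoc, Unitary.star_mul_self_of_mem g.2, one_mul]
  calc star (g : R) * c * E (star c * g) * b
      = star (g : R) * c * E (star c * β * g) := by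
        rw [mul_assoc _ (E _), ← hE.map_mul_right hb, mul_assoc (star c), hgb,
          ← mul_assoc (star c)]
    _ = star (g : R) * (c * β) * E (star c * g) := by
        rw [mem_relCommutant.mp (star_mem hc) β hβB, mul_assoc β, hE.map_mul_left hβB]
        simp only [mul_assoc]
    _ = b * (star (g : R) * c * E (star c * g)) := by
        rw [mem_relCommutant.mp hc β hβB, ← mul_assoc _ β, ← hbg]
        simp only [mul_assoc]

lemma IsNormalizingFamily.star_mul_sub_mem_relCommutant {ι : Type*} [Fintype ι]
    [DecidableEq ι] {u : ι → unitary R} {c : ι → R} (hv : IsNormalizingFamily B E u c)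
    (hE : IsCondExp (B : Set R) E) {w : unitary R}
    (hw : (w : R) ∈ normalizer (B : Set R)) :
    star (w : R) * (w - ∑ k, u k * c k * E (star (u k * c k) * w)) ∈ relCommutant B := by
  rw [mul_sub, Unitary.star_mul_self_of_mem w.2, Finset.mul_sum]
  refine sub_mem (one_mem _) (sum_mem fun k _ => ?_)
  have hg : ((star (u k) * w : unitary R) : R) ∈ normalizer (B : Set R) :=
    mul_mem_normalizer (star_mem_normalizer (hv.mem_normalizer k)) hw
  simpa [mul_assoc] using
    hE.star_mul_mul_apply_mem_relCommutant hg (hv.mem_relCommutant k)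

variable [PartialOrder R] [StarOrderedRing R] {r : ℝ} {n : ℕ} {l : Fin n → R}

lemma IsStationary.sum_apply_mul_apply_star_mul (h : IsStationary B E r l) {u : unitary R}
    (hu : (u : R) ∈ normalizer (B : Set R)) {c : R} (hc : c ∈ relCommutant B) :
    ∑ i, E (l i * (u * c)) * E (star (u * c) * star (l i)) = E (star (u * c) * (u * c)) := by
  apply (Unitary.conjStarAlgAut ℂ R u).injective
  calc Unitary.conjStarAlgAut ℂ R u (∑ i, E (l i * (u * c)) * E (star (u * c) * star (l i)))
      = ∑ i, E (u * c * l i) * E (star (l i) * star (u * c)) := by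
        rw [map_sum]
        refine Finset.sum_congr rfl fun i _ => ?_
        rw [map_mul, h.apply_mul_left hu hc, h.apply_mul_star hu hc]
        rfl
    _ = E (u * c * star (u * c)) := by
        rw [← h.isCondExp.map_sum_mul_apply, ← h.isRightQB.expand h.isCondExp]
    _ = Unitary.conjStarAlgAut ℂ R u (E (star (u * c) * (u * c))) := h.apply_mul_star hu hc _

lemma IsNormalizingFamily.card_le [Nontrivial R] {ι : Type*} [Fintype ι] [DecidableEq ι]
    {u : ι → unitary R} {c : ι → R} (hv : IsNormalizingFamily B E u c)
    (h : IsStationary B E r l) : (Fintype.card ι : ℝ) ≤ r := by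
  have hsum : ∑ k, ∑ i, E (l i * (u k * c k)) * E (star (u k * c k) * star (l i))
      = (Fintype.card ι : ℝ) • (1 : R) := by
    rw [Finset.sum_congr rfl fun k _ =>
      h.sum_apply_mul_apply_star_mul (hv.mem_normalizer k) (hv.mem_relCommutant k)]
    simp only [hv.isOrthonormal _ _, if_true, Finset.sum_const, Finset.card_univ,
      Nat.cast_smul_eq_nsmul]
  have hle : (Fintype.card ι : ℝ) • (1 : R) ≤ r • 1 := by
    rw [← hsum, Finset.sum_comm]
    calc ∑ i, ∑ k, E (l i * (u k * c k)) * E (star (u k * c k) * star (l i))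
        ≤ ∑ i, E (l i * star (l i)) := Finset.sum_le_sum fun i _ => by
          simpa only [star_star] using hv.isOrthonormal.bessel h.isCondExp (star (l i))
      _ = r • 1 := by
          rw [← map_sum, ← indexMap_one, h.indexMap_eq 1 (one_mem _), h.isCondExp.map_one,
            E.map_smul_of_tower, h.isCondExp.map_one]
  rw [← sub_nonneg, ← sub_smul] at hle
  exact sub_nonneg.mp (nonneg_of_smul_one_nonneg hle)

lemma IsOrthonormal.cons {m : ℕ} {v : Fin m → R} (hv : IsOrthonormal E v)
    (hE : IsCondExp (B : Set R) E) {x : R} (hx : E (star x * x) = 1)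
    (hvx : ∀ k, E (star (v k) * x) = 0) : IsOrthonormal E (Fin.cons x v : Fin (m + 1) → R) := by
  have hxv : ∀ k, E (star x * v k) = 0 := fun k => by rw [hE.apply_star_mul, hvx, star_zero]
  refine fun i j => ?_
  cases i using Fin.cases <;> cases j using Fin.cases <;>
    simp [hx, hvx, hxv, hv _ _, (Fin.succ_ne_zero _).symm]

lemma IsNormalizingFamily.exists_cons [Algebra.IsCentral ℂ B] {m : ℕ} {u : Fin m → unitary R}
    {c : Fin m → R} (hv : IsNormalizingFamily B E u c) (hE : IsCondExp (B : Set R) E)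
    (hl : IsRightQB E l) {w : unitary R} (hw : (w : R) ∈ normalizer (B : Set R))
    (hne : (w : R) ≠ ∑ k, u k * c k * E (star (u k * c k) * w)) :
    ∃ d : R, IsNormalizingFamily B E (Fin.cons w u : Fin (m + 1) → unitary R)
      (Fin.cons d c : Fin (m + 1) → R) := by
  set q := (w : R) - ∑ k, u k * c k * E (star (u k * c k) * w) with hq
  have hqmem : star (w : R) * q ∈ relCommutant B := hv.star_mul_sub_mem_relCommutant hE hw
  have hwq : (w : R) * (star (w : R) * q) = q := by
    rw [← mul_assoc, Unitary.mul_star_self_of_mem w.2, one_mul]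
  have hq0 : star (w : R) * q ≠ 0 := fun h0 => hne <| sub_eq_zero.mp <| by
    rw [← hq, ← hwq, h0, mul_zero]
  obtain ⟨s, hs, hsq⟩ := hE.exists_pos_smul_one hl hqmem hq0
  have hqorth : ∀ k, E (star (u k * c k) * q) = 0 := fun k => by
    rw [hq, mul_sub, map_sub, hv.isOrthonormal.apply_star_mul_sum hE, sub_self]
  have hqq : E (star q * q) = s • 1 := by
    rw [← hsq, star_mul, star_star, mul_assoc, hwq]
  let d := (√s)⁻¹ • (star (w : R) * q)
  have hwd : (w : R) * d = (√s)⁻¹ • q := by rw [mul_smul_comm, hwq]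
  have hfamily : (fun k => (Fin.cons w u : Fin (m + 1) → unitary R) k
      * (Fin.cons d c : Fin (m + 1) → R) k) = Fin.cons ((√s)⁻¹ • q) fun k => u k * c k := by
    refine funext (Fin.cases ?_ fun k => ?_)
    exacts [hwd, rfl]
  have hd : d ∈ relCommutant B := real_smul_mem_relCommutant _ hqmem
  refine ⟨d, Fin.cases hw hv.mem_normalizer, Fin.cases hd hv.mem_relCommutant, ?_⟩
  rw [hfamily]
  refine hv.isOrthonormal.cons hE (apply_star_mul_inv_sqrt_smul hs hqq) fun k => ?_
  rw [mul_smul_comm, E.map_smul_of_tower, hqorth, smul_zero]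

/- The length of a normalizing family is bounded by the index, so a longest one exists; it cannot be
extended, which forces every normalizer to lie in its span. -/
lemma IsStationary.exists_isNormalizingFamily [Nontrivial R] [Algebra.IsCentral ℂ B]
    (h : IsStationary B E r l) :
    ∃ (m : ℕ) (u : Fin m → unitary R) (c : Fin m → R), IsNormalizingFamily B E u c ∧
      ∀ w ∈ normalizer (B : Set R), w = ∑ k, u k * c k * E (star (u k * c k) * w) := by
  by_contra! hincomplete
  have hlong : ∀ m : ℕ, ∃ (u : Fin m → unitary R) (c : Fin m → R),
      IsNormalizingFamily B E u c := fun m => by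
    induction m with
    | zero => exact ⟨Fin.elim0, Fin.elim0, fun k => k.elim0, fun k => k.elim0, fun k => k.elim0⟩
    | succ m ih =>
      obtain ⟨u, c, hv⟩ := ih
      obtain ⟨w, hw, hne⟩ := hincomplete m u c hv
      obtain ⟨d, hd⟩ := hv.exists_cons h.isCondExp h.isRightQB (w := ⟨w, hw.1⟩) hw hne
      exact ⟨_, _, hd⟩
  obtain ⟨m, hm⟩ := exists_nat_gt r
  obtain ⟨u, c, hv⟩ := hlong m
  exact hm.not_ge (by simpa using hv.card_le h)

end NormalizingFamily

section TwoSided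

variable [PartialOrder R] [StarOrderedRing R] {r : ℝ} {n : ℕ} {l : Fin n → R} {ι : Type*}
  [Fintype ι]

lemma IsCondExp.eq_sum_mul_apply_of_isRegular (hE : IsCondExp (B : Set R) E)
    (hreg : IsRegular (B : Set R)) {v : ι → R}
    (hv : ∀ w ∈ normalizer (B : Set R), w = ∑ k, v k * E (star (v k) * w)) (x : R) :
    x = ∑ k, v k * E (star (v k) * x) := by
  let expansion : R →L[ℂ] R := ∑ k, ContinuousLinearMap.mul ℂ R (v k) ∘L
    ⟨E, hE.continuous⟩ ∘L ContinuousLinearMap.mul ℂ R (star (v k))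
  have hexpansion : ∀ y, expansion y = ∑ k, v k * E (star (v k) * y) := fun y =>
    sum_apply _ _ _
  have hid : ContinuousLinearMap.id ℂ R = expansion :=
    ContinuousLinearMap.ext_on (dense_span_normalizer hreg) fun w hw =>
      (hv w hw).trans (hexpansion w).symm
  exact (DFunLike.congr_fun hid x).trans (hexpansion x)

lemma IsCondExp.eq_sum_apply_mul_star (hE : IsCondExp (B : Set R) E) {v : ι → R}
    (hv : ∀ x, x = ∑ k, v k * E (star (v k) * x)) (x : R) :
    x = ∑ k, E (x * v k) * star (v k) := by
  simpa [star_sum, ← hE.map_star] using congrArg star (hv (star x))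

lemma IsStationary.eq_sum_apply_mul_star_mul [DecidableEq ι] (h : IsStationary B E r l)
    {u : ι → unitary R} {c : ι → R} (huc : IsNormalizingFamily B E u c)
    (hv : ∀ x, x = ∑ k, u k * c k * E (star (u k * c k) * x)) (x : R) :
    x = ∑ k, E (x * star (u k * c k)) * (u k * c k) := by
  refine (hv x).trans (Finset.sum_congr rfl fun k _ => ?_)
  rw [h.apply_mul_star (huc.mem_normalizer k) (huc.mem_relCommutant k), mul_assoc (u k : R),
    mem_relCommutant.mp (huc.mem_relCommutant k) _ (h.isCondExp.apply_mem _), mul_assoc _ (star _),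
    ← mul_assoc (star _), Unitary.star_mul_self_of_mem (u k).2, one_mul, ← mul_assoc]

end TwoSided

theorem minimal_CE_of_regular_inclusion_has_two_sided_ON_quasi_basis_general
    (B : StarSubalgebra ℂ A) [Algebra.IsCentral ℂ A] [Algebra.IsCentral ℂ B]
    (hreg : IsRegular (B : Set A))
    (E₀ : A →ₗ[ℂ] A) (hE₀ : IsMinimalCondExp (B : Set A) E₀) :
    ∃ (m : ℕ) (v : Fin m → A),
      (∀ k l, E₀ (star (v k) * v l) = if k = l then (1 : A) else 0) ∧
      (∀ x : A, x = ∑ k, E₀ (x * v k) * star (v k)) ∧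
      (∀ x : A, x = ∑ k, E₀ (x * star (v k)) * v k) := by
  cases subsingleton_or_nontrivial A
  · exact ⟨0, Fin.elim0, fun k => k.elim0, fun _ => Subsingleton.elim _ _,
      fun _ => Subsingleton.elim _ _⟩
  let _ : CStarAlgebra A := {}
  let _ : PartialOrder A := CStarAlgebra.spectralOrder A
  have _ : StarOrderedRing A := CStarAlgebra.spectralOrderedRing A
  obtain ⟨r, n, l, h⟩ := hE₀.exists_isStationary
  obtain ⟨m, u, c, huc, hspan⟩ := h.exists_isNormalizingFamily
  have hexpand := h.isCondExp.eq_sum_mul_apply_of_isRegular hreg hspan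
  exact ⟨m, fun k => u k * c k, huc.isOrthonormal, h.isCondExp.eq_sum_apply_mul_star hexpand,
    h.eq_sum_apply_mul_star_mul huc hexpand⟩

/-- the minimal conditional expectation of a regular inclusion `B ⊂ A` of
simple unital C*-algebras with a finite-index conditional expectation admits a two-sided
orthonormal quasi-basis. -/
theorem minimal_CE_of_regular_inclusion_has_two_sided_ON_quasi_basis
    (B : StarSubalgebra ℂ A) (hBclosed : IsClosed (B : Set A))
    (hAsimple : IsSimpleCStar (Set.univ : Set A))
    (hBsimple : IsSimpleCStar (B : Set A))
    (hreg : IsRegular (B : Set A))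
    (E : A →ₗ[ℂ] A) (hE : IsCondExp (B : Set A) E)
    (nE : ℕ) (lE : Fin nE → A) (hlE : IsRightQB E lE)
    (E₀ : A →ₗ[ℂ] A) (hE₀ : IsMinimalCondExp (B : Set A) E₀) :
    ∃ (m : ℕ) (v : Fin m → A),
      (∀ k l, E₀ (star (v k) * v l) = if k = l then (1 : A) else 0) ∧
      (∀ x : A, x = ∑ k, E₀ (x * v k) * star (v k)) ∧
      (∀ x : A, x = ∑ k, E₀ (x * star (v k)) * v k) := by
  let _ : CStarAlgebra A := {}
  have : Algebra.IsCentral ℂ A := hAsimple.isCentral_of_univ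
  have : Algebra.IsCentral ℂ B :=
    IsSimpleCStar.isCentral (S := B.toSubalgebra) hBsimple hBclosed
  exact minimal_CE_of_regular_inclusion_has_two_sided_ON_quasi_basis_general B hreg E₀ hE₀

end RegularInclusion
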